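/- Let X be a topological space and XI its Alexandroff Noodles. Then Hom_p(XI) is a topological group. -/

import Mathlib

open Topology unitInterval

/-- The canonical projection sending `Sum.inl x` to `(x, 0)` and `Sum.inr p` to `p`;
its kernel is exactly the equivalence relation identifying each `x ∈ X` with `(x, 0)`. -/
def noodleProj (X : Type*) : X ⊕ (X × unitInterval) → X × unitInterval
  | Sum.inl x => (x, 0)
  | Sum.inr p => p

/-- The equivalence relation on `X ⊕ (X × [0,1])` identifying each `x ∈ X` with `(x, 0)`. -/
def noodleSetoid (X : Type*) : Setoid (X ⊕ (X × unitInterval)) := Setoid.ker (noodleProj X)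

/-- The Alexandroff Noodles of `X`: the quotient of the sum of `X` and `D × [0,1]`
(`D` the underlying set of `X`) identifying each `x ∈ X` with `(x, 0)`. -/
def Noodles (X : Type*) : Type _ := Quotient (noodleSetoid X)

/-- The topology of the sum of `X` and `D × [0,1]`, where `D` is the underlying set of `X`
with the discrete topology. -/
def noodleSumTop (X : Type*) [t : TopologicalSpace X] :
    TopologicalSpace (X ⊕ (X × unitInterval)) :=
  @instTopologicalSpaceSum X (X × unitInterval) t
    (@instTopologicalSpaceProd X unitInterval ⊥ inferInstance)

/-- The Alexandroff Noodles carry the quotient topology. -/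
instance noodlesTop (X : Type*) [TopologicalSpace X] : TopologicalSpace (Noodles X) :=
  (noodleSumTop X).coinduced (Quotient.mk (noodleSetoid X))

/-- The point `r_x` of the Alexandroff Noodles, for `x ∈ X` and `r ∈ [0,1]`
(so `0_x` is `noodlePt x 0`, the common image of `x` and `(x, 0)`). -/
def noodlePt {X : Type*} (x : X) (r : unitInterval) : Noodles X :=
  Quotient.mk (noodleSetoid X) (Sum.inr (x, r))

/-- The topology of pointwise convergence on the group of self-homeomorphisms of `X`,
induced by the inclusion of `Hom(X)` into the product space `X → X`. -/
def homPTop (X : Type*) [TopologicalSpace X] : TopologicalSpace (X ≃ₜ X) :=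
  TopologicalSpace.induced (fun f => (f : X → X)) inferInstance

/-!
The noodle `{x} × (0, 1]`, together with its base point when `x` is isolated in `X`, is an arc; the
arcs are the components of an open set `arcs X`, whose complement is the set of base points of
non-isolated `x`. On an arc, no point that a homeomorphism sends to a base point lies between two
others, since the noodle growing from the middle one would have no room; so there are only finitely
many, and every homeomorphism preserves `arcs X`.

The space `arcs X` is Hausdorff, locally connected and has a base of open sets with finite frontier.
In such a space, if `g` is pointwise close to `f` at `f⁻¹ p` and on the finite frontier of a small
neighbourhood `V` of `f⁻¹ p`, then `g⁻¹` maps a connected neighbourhood of `p` into `V`; hence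
`(f, p) ↦ f⁻¹ p` is jointly continuous. Off `arcs X`, the closure of a base point is recovered from
the arc ending there, so homeomorphisms that send this arc to the same arc send the base point to
inseparable points.
-/

open Set Filter

section RimFinite

/-- A rim-finite (or regular, in the sense of Menger) space: every point has arbitrarily small open
neighbourhoods with finite frontier. -/
class RimFiniteSpace (Y : Type*) [TopologicalSpace Y] : Prop where
  exists_finite_frontier : ∀ (y : Y), ∀ W ∈ 𝓝 y,
    ∃ V ⊆ W, IsOpen V ∧ y ∈ V ∧ (frontier V).Finite

theorem frontier_Icc_subset_pair {α : Type*} [TopologicalSpace α] [LinearOrder α]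
    [OrderClosedTopology α] (a b : α) : frontier (Icc a b) ⊆ {a, b} := by
  rw [isClosed_Icc.frontier_eq]
  rintro t ⟨ht, ht'⟩
  have : t ∉ Ioo a b := fun h => ht' (interior_maximal Ioo_subset_Icc_self isOpen_Ioo h)
  grind

instance RimFiniteSpace.of_orderTopology {α : Type*} [TopologicalSpace α] [LinearOrder α]
    [OrderTopology α] : RimFiniteSpace α where
  exists_finite_frontier t W hW := by
    obtain ⟨a, b, -, hab, habW⟩ := exists_Icc_mem_subset_of_mem_nhds hW
    exact ⟨interior (Icc a b), interior_subset.trans habW, isOpen_interior,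
      mem_interior_iff_mem_nhds.2 hab, (toFinite {a, b}).subset
        (frontier_interior_subset.trans (frontier_Icc_subset_pair a b))⟩

theorem RimFiniteSpace.of_isEmbedding {Y Z : Type*} [TopologicalSpace Y] [TopologicalSpace Z]
    [RimFiniteSpace Z] {e : Y → Z} (he : IsEmbedding e) : RimFiniteSpace Y where
  exists_finite_frontier y W hW := by
    obtain ⟨W', hW', hW'W⟩ := he.nhds_eq_comap y ▸ hW
    obtain ⟨V, hVW', hV, hyV, hfin⟩ := exists_finite_frontier (e y) W' hW'
    exact ⟨e ⁻¹' V, (preimage_mono hVW').trans hW'W, hV.preimage he.continuous, hyV,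
      (hfin.preimage he.injective.injOn).subset (he.continuous.frontier_preimage_subset V)⟩

variable {ι : Type*} {Y : ι → Type*} [∀ i, TopologicalSpace (Y i)]

theorem frontier_image_sigmaMk {i : ι} {V : Set (Y i)} (hV : IsOpen V) :
    frontier (Sigma.mk i '' V) = Sigma.mk i '' frontier V := by
  rw [(isOpenMap_sigmaMk V hV).frontier_eq, hV.frontier_eq, image_sdiff sigma_mk_injective,
    IsClosedEmbedding.sigmaMk.closure_image_eq]

instance RimFiniteSpace.sigma [∀ i, RimFiniteSpace (Y i)] : RimFiniteSpace (Σ i, Y i) where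
  exists_finite_frontier := by
    rintro ⟨i, y⟩ W hW
    obtain ⟨V, hVW, hV, hyV, hfin⟩ := exists_finite_frontier y (Sigma.mk i ⁻¹' W)
      (continuous_sigmaMk.continuousAt hW)
    refine ⟨Sigma.mk i '' V, image_subset_iff.2 hVW, isOpenMap_sigmaMk V hV,
      mem_image_of_mem _ hyV, ?_⟩
    rw [frontier_image_sigmaMk hV]
    exact hfin.image _

end RimFinite

section LocallyConnected

instance locallyConnectedSpace_of_orderTopology {α : Type*} [TopologicalSpace α]
    [ConditionallyCompleteLinearOrder α] [DenselyOrdered α] [OrderTopology α] :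
    LocallyConnectedSpace α := by
  rw [locallyConnectedSpace_iff_connected_subsets]
  intro t W hW
  obtain ⟨a, b, -, hab, habW⟩ := exists_Icc_mem_subset_of_mem_nhds hW
  exact ⟨Icc a b, hab, isPreconnected_Icc, habW⟩

instance locallyConnectedSpace_sigma {ι : Type*} {Y : ι → Type*} [∀ i, TopologicalSpace (Y i)]
    [∀ i, LocallyConnectedSpace (Y i)] : LocallyConnectedSpace (Σ i, Y i) := by
  rw [locallyConnectedSpace_iff_connected_subsets]
  rintro ⟨i, y⟩ W hW
  obtain ⟨V, hV, hVconn, hVW⟩ := locallyConnectedSpace_iff_connected_subsets.1 inferInstance y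
    (Sigma.mk i ⁻¹' W) (continuous_sigmaMk.continuousAt hW)
  exact ⟨Sigma.mk i '' V, IsOpenEmbedding.sigmaMk.image_mem_nhds.2 hV,
    hVconn.image _ continuous_sigmaMk.continuousOn, image_subset_iff.2 hVW⟩

end LocallyConnected

theorem tendsto_nhds_of_eventually_inseparable {α Y : Type*} [TopologicalSpace Y] {l : Filter α}
    {u v : α → Y} {y : Y} (huv : ∀ᶠ a in l, Inseparable (u a) (v a)) (hv : Tendsto v l (𝓝 y)) :
    Tendsto u l (𝓝 y) := by
  rw [(nhds_basis_opens y).tendsto_right_iff]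
  rintro W ⟨hyW, hW⟩
  filter_upwards [huv, hv (hW.mem_nhds hyW)] with a ha haW
  exact (ha.mem_open_iff hW).2 haW

attribute [local instance] homPTop

namespace homPTop

variable {Y : Type*} [TopologicalSpace Y]

theorem continuous_eval (y : Y) : Continuous fun f : Y ≃ₜ Y => f y :=
  (continuous_apply y).comp continuous_induced_dom

theorem continuous_iff {Z : Type*} [TopologicalSpace Z] {F : Z → Y ≃ₜ Y} :
    Continuous F ↔ ∀ y, Continuous fun z => F z y :=
  continuous_induced_rng.trans continuous_pi_iff

theorem continuous_inv_eval [T2Space Y] [LocallyConnectedSpace Y] [RimFiniteSpace Y] :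
    Continuous fun a : (Y ≃ₜ Y) × Y => a.1⁻¹ a.2 := by
  refine continuous_iff_continuousAt.2 fun ⟨f, p⟩ W hW => ?_
  obtain ⟨V, hVW, hV, hqV, hfin⟩ := RimFiniteSpace.exists_finite_frontier (f⁻¹ p) W hW
  have hp : Disjoint {p} (f '' frontier V) := by
    rw [disjoint_singleton_left]
    rintro ⟨k, hk, rfl⟩
    exact (hV.frontier_eq ▸ hk).2 (by simpa using hqV)
  obtain ⟨U, O, hU, hO, hpU, hfO, hUO⟩ := SeparatedNhds.of_finite (finite_singleton p)
    (hfin.image f) hp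
  have hC : connectedComponentIn U p ∈ 𝓝 p :=
    hU.connectedComponentIn.mem_nhds (mem_connectedComponentIn (hpU rfl))
  have hfrontier : ∀ᶠ g in 𝓝 f, ∀ k ∈ frontier V, g k ∈ O :=
    hfin.eventually_all.2 fun k hk =>
      (continuous_eval k).continuousAt (hO.mem_nhds (hfO ⟨k, hk, rfl⟩))
  have hcentre : ∀ᶠ g in 𝓝 f, g (f⁻¹ p) ∈ connectedComponentIn U p :=
    (continuous_eval (f⁻¹ p)).continuousAt (by simpa using hC)
  rw [mem_map]
  filter_upwards [prod_mem_nhds (hfrontier.and hcentre) hC]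
  rintro ⟨g, p'⟩ ⟨⟨hgO, hgC⟩, hp'⟩
  have hconn : IsPreconnected (g ⁻¹' connectedComponentIn U p) :=
    g.isPreconnected_preimage.2 isPreconnected_connectedComponentIn
  have hsub : g ⁻¹' connectedComponentIn U p ⊆ V := by
    refine hconn.subset_of_closure_inter_subset hV ⟨f⁻¹ p, hgC, hqV⟩ ?_
    rintro k ⟨hkV, hkC⟩
    by_contra hk
    exact disjoint_left.1 hUO (connectedComponentIn_subset U p hkC)
      (hgO k (hV.frontier_eq ▸ ⟨hkV, hk⟩))
  exact hVW (hsub (by simpa using hp'))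

theorem isTopologicalGroup [T2Space Y] [LocallyConnectedSpace Y] [RimFiniteSpace Y] :
    IsTopologicalGroup (Y ≃ₜ Y) := by
  have continuous_inv : Continuous fun f : Y ≃ₜ Y => f⁻¹ :=
    continuous_iff.2 fun y => continuous_inv_eval.comp (.prodMk_left y)
  refine { continuous_mul := continuous_iff.2 fun y => ?_, continuous_inv }
  have hcomp : Continuous fun a : (Y ≃ₜ Y) × (Y ≃ₜ Y) => (a.1⁻¹)⁻¹ (a.2 y) :=
    continuous_inv_eval.comp
      ((continuous_inv.comp continuous_fst).prodMk ((continuous_eval y).comp continuous_snd))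
  simpa using hcomp

theorem continuous_subtype {R : Set Y} (hR : ∀ (f : Y ≃ₜ Y) (y : Y), y ∈ R ↔ f y ∈ R) :
    Continuous fun f : Y ≃ₜ Y => f.subtype (hR f) :=
  continuous_iff.2 fun y => (continuous_eval (y : Y)).subtype_mk _

theorem isTopologicalGroup_of_invariant {R : Set Y}
    (hR : ∀ (f : Y ≃ₜ Y) (y : Y), y ∈ R ↔ f y ∈ R) [IsTopologicalGroup (R ≃ₜ R)]
    (hinsep : ∀ y ∉ R, ∀ f : Y ≃ₜ Y, ∀ᶠ g in 𝓝 f, Inseparable (g y) (f y)) :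
    IsTopologicalGroup (Y ≃ₜ Y) where
  continuous_mul := by
    refine continuous_iff.2 fun y => ?_
    by_cases hy : y ∈ R
    · have hmul := ((continuous_subtype hR).comp continuous_fst).mul
        ((continuous_subtype hR).comp continuous_snd)
      exact continuous_subtype_val.comp ((continuous_eval (⟨y, hy⟩ : R)).comp hmul)
    · refine continuous_iff_continuousAt.2 fun ⟨f, g⟩ => ?_
      have hg : ∀ᶠ a : (Y ≃ₜ Y) × (Y ≃ₜ Y) in 𝓝 (f, g), Inseparable (a.1 (a.2 y)) (a.1 (g y)) :=
        (continuousAt_snd.eventually (hinsep y hy g)).mono fun a ha => ha.map a.1.continuous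
      exact tendsto_nhds_of_eventually_inseparable hg
        ((continuous_eval (g y)).comp continuous_fst).continuousAt
  continuous_inv := by
    refine continuous_iff.2 fun y => ?_
    by_cases hy : y ∈ R
    · exact continuous_subtype_val.comp
        ((continuous_eval (⟨y, hy⟩ : R)).comp (continuous_subtype hR).inv)
    · refine continuous_iff_continuousAt.2 fun f => ?_
      have hy' : f⁻¹ y ∉ R := fun h => hy ((hR f⁻¹ y).2 h)
      have hinv : ∀ᶠ g in 𝓝 f, Inseparable (g⁻¹ y) (f⁻¹ y) :=
        (hinsep _ hy' f).mono fun g hg => by simpa using (hg.map g⁻¹.continuous).symm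
      exact tendsto_nhds_of_eventually_inseparable hinv tendsto_const_nhds

end homPTop

theorem le_of_injOn_lt_of_continuousOn {α δ : Type*} [TopologicalSpace α]
    [ConditionallyCompleteLinearOrder α] [OrderTopology α] [DenselyOrdered α] [TopologicalSpace δ]
    [LinearOrder δ] [OrderClosedTopology δ] [DenselyOrdered δ] {φ : α → δ} {m : δ} {a b t : α}
    (hφ : ContinuousOn φ (Icc a b)) (hinj : InjOn φ {t | m < φ t}) (ha : φ a ≤ m) (hb : φ b ≤ m)
    (ht : t ∈ Icc a b) : φ t ≤ m := by
  by_contra! hmt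
  obtain ⟨l, hml, hlt⟩ := exists_between hmt
  obtain ⟨s, hs, rfl⟩ := intermediate_value_Icc ht.1 (hφ.mono (Icc_subset_Icc_right ht.2))
    ⟨ha.trans hml.le, hlt.le⟩
  obtain ⟨s', hs', hss'⟩ := intermediate_value_Icc' ht.2 (hφ.mono (Icc_subset_Icc_left ht.1))
    ⟨hb.trans hml.le, hlt.le⟩
  obtain rfl : s' = s := hinj (hml.trans_eq hss'.symm) hml hss'
  exact hlt.ne (congrArg φ (le_antisymm hs.2 hs'.1))

theorem isOpen_prod_iff_of_discreteTopology {D Y : Type*} [TopologicalSpace D] [DiscreteTopology D]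
    [TopologicalSpace Y] {s : Set (D × Y)} : IsOpen s ↔ ∀ d, IsOpen (Prod.mk d ⁻¹' s) :=
  continuous_Prop.symm.trans
    (continuous_prod_of_discrete_left.trans (forall_congr' fun _ => continuous_Prop))

namespace Noodles

variable {X : Type*}

theorem noodlePt_inj {x y : X} {r s : I} : noodlePt x r = noodlePt y s ↔ x = y ∧ r = s :=
  (Setoid.kerLift_injective (noodleProj X)).eq_iff.symm.trans Prod.mk_inj

theorem noodlePt_injective (x : X) : Function.Injective (noodlePt x) :=
  fun _ _ h => (noodlePt_inj.1 h).2

theorem mk_inl (x : X) :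
    (Quotient.mk (noodleSetoid X) (Sum.inl x) : Noodles X) = noodlePt x 0 :=
  Quotient.sound (s := noodleSetoid X) rfl

theorem exists_eq_noodlePt (p : Noodles X) : ∃ x r, p = noodlePt x r := by
  obtain ⟨x | ⟨x, r⟩, rfl⟩ := Quotient.exists_rep p
  · exact ⟨x, 0, mk_inl x⟩
  · exact ⟨x, r, rfl⟩

open Classical in
/-- The coordinate along the noodle of `z`: the retraction of the Noodles onto `[0,1]` sending
`r_z` to `r` and collapsing every other noodle to `0`. -/
noncomputable def coord (z : X) (p : Noodles X) : I :=
  if (Setoid.kerLift (noodleProj X) p).1 = z then (Setoid.kerLift (noodleProj X) p).2 else 0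

theorem coord_noodlePt_self (z : X) (r : I) : coord z (noodlePt z r) = r :=
  if_pos rfl

theorem coord_noodlePt_of_ne {y z : X} (h : y ≠ z) (r : I) : coord z (noodlePt y r) = 0 :=
  if_neg h

theorem coord_noodlePt_zero (z y : X) : coord z (noodlePt y 0) = 0 :=
  ite_self 0

theorem noodlePt_coord {z : X} {p : Noodles X} (h : 0 < coord z p) :
    noodlePt z (coord z p) = p := by
  obtain ⟨y, r, rfl⟩ := exists_eq_noodlePt p
  obtain rfl : y = z := by_contra fun hyz => h.ne' (coord_noodlePt_of_ne hyz r)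
  rw [coord_noodlePt_self]

theorem injOn_coord (z : X) : InjOn (coord z) {p | 0 < coord z p} := by
  intro p hp q hq hpq
  rw [← noodlePt_coord hp, ← noodlePt_coord hq, hpq]

variable [TopologicalSpace X]

theorem isOpen_iff {U : Set (Noodles X)} :
    IsOpen U ↔ IsOpen ((noodlePt · 0) ⁻¹' U) ∧ ∀ x, IsOpen (noodlePt x ⁻¹' U) := by
  let discrete : TopologicalSpace (X × I) := @instTopologicalSpaceProd X I ⊥ inferInstance
  have hinl : Quotient.mk (noodleSetoid X) ∘ Sum.inl = (noodlePt · 0) := funext mk_inl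
  have hsum : IsOpen U ↔ IsOpen ((noodlePt · 0) ⁻¹' U) ∧
      IsOpen[discrete] {q : X × I | noodlePt q.1 q.2 ∈ U} := by
    rw [← hinl]
    exact isOpen_coinduced.trans isOpen_sum_iff
  refine hsum.trans (and_congr_right fun _ => ?_)
  let : TopologicalSpace X := ⊥
  have : DiscreteTopology X := ⟨rfl⟩
  exact isOpen_prod_iff_of_discreteTopology

theorem continuous_noodlePt (x : X) : Continuous (noodlePt x) :=
  continuous_def.2 fun _ hU => (isOpen_iff.1 hU).2 x

theorem continuous_coord (z : X) : Continuous (coord z) := by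
  refine continuous_def.2 fun U hU => isOpen_iff.2 ⟨?_, fun y => ?_⟩
  · simp only [preimage_preimage, coord_noodlePt_zero]
    exact isOpen_const
  · obtain rfl | hyz := eq_or_ne y z
    · simp only [preimage_preimage, coord_noodlePt_self]
      exact hU
    · simp only [preimage_preimage, coord_noodlePt_of_ne hyz]
      exact isOpen_const

theorem exists_pos_noodlePt_mem {U : Set (Noodles X)} (hU : IsOpen U) {x : X}
    (hx : noodlePt x 0 ∈ U) : ∃ r, 0 < r ∧ noodlePt x r ∈ U := by
  have hnhds : ∀ᶠ r in 𝓝[>] (0 : I), noodlePt x r ∈ U :=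
    nhdsWithin_le_nhds ((continuous_noodlePt x).continuousAt (hU.mem_nhds hx))
  have := nhdsGT_neBot_of_exists_gt (⟨1, zero_lt_one⟩ : ∃ r : I, 0 < r)
  exact (eventually_mem_nhdsWithin.and hnhds).exists

/-- The parameters `r` for which `r_x` lies on the arc of `x`: all of `[0,1]` if `x` is isolated,
and `(0,1]` otherwise. -/
def arcParam (x : X) : Set I := {r | 0 < r ∨ IsOpen {x}}

/-- The arc of `x`: its noodle, including the base point only if `x` is isolated in `X`. These are
the largest parts of the noodles that are open in the Noodles. -/
def arc (x : X) : Set (Noodles X) := noodlePt x '' arcParam x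

variable (X) in
/-- The union of all arcs, i.e. the Noodles without the base points of non-isolated points. -/
def arcs : Set (Noodles X) := ⋃ x, arc x

theorem noodlePt_mem_arc {x y : X} {r : I} : noodlePt y r ∈ arc x ↔ y = x ∧ r ∈ arcParam x := by
  simp only [arc, mem_image, noodlePt_inj]
  grind

theorem noodlePt_mem_arcs {x : X} {r : I} : noodlePt x r ∈ arcs X ↔ r ∈ arcParam x := by
  simp [arcs, noodlePt_mem_arc]

theorem noodlePt_zero_mem_arcs {x : X} : noodlePt x 0 ∈ arcs X ↔ IsOpen {x} := by
  simp [noodlePt_mem_arcs, arcParam]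

theorem noodlePt_one_mem_arc (x : X) : noodlePt x 1 ∈ arc x :=
  ⟨1, Or.inl zero_lt_one, rfl⟩

theorem exists_eq_noodlePt_zero {p : Noodles X} (hp : p ∉ arcs X) :
    ∃ x, p = noodlePt x 0 ∧ ¬ IsOpen {x} := by
  obtain ⟨x, r, rfl⟩ := exists_eq_noodlePt p
  obtain ⟨hr, hx⟩ := not_or.1 (mt noodlePt_mem_arcs.2 hp)
  exact ⟨x, by rw [le_antisymm (not_lt.1 hr) unitInterval.nonneg'], hx⟩

theorem isOpen_arcParam (x : X) : IsOpen (arcParam x) :=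
  isOpen_Ioi.union isOpen_const

theorem ordConnected_arcParam (x : X) : OrdConnected (arcParam x) :=
  IsUpperSet.ordConnected fun _ _ hrs => Or.imp_left hrs.trans_lt'

theorem isOpen_image_noodlePt {x : X} {O : Set I} (hO : IsOpen O) (hOx : O ⊆ arcParam x) :
    IsOpen (noodlePt x '' O) := by
  refine isOpen_iff.2 ⟨?_, fun y => ?_⟩
  · by_cases h0 : (0 : I) ∈ O
    · have hpre : (noodlePt · 0) ⁻¹' (noodlePt x '' O) = {x} := by
        ext y; simp [noodlePt_inj, h0, eq_comm]
      simpa [hpre, arcParam] using hOx h0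
    · have hpre : (noodlePt · 0) ⁻¹' (noodlePt x '' O) = ∅ := by
        ext y; simp [noodlePt_inj, h0]
      simp [hpre]
  · obtain rfl | hyx := eq_or_ne x y
    · rwa [preimage_image_eq O (noodlePt_injective x)]
    · have hpre : noodlePt y ⁻¹' (noodlePt x '' O) = ∅ := by
        ext r; simp [noodlePt_inj, hyx]
      simp [hpre]

theorem isOpen_arc (x : X) : IsOpen (arc x) :=
  isOpen_image_noodlePt (isOpen_arcParam x) Subset.rfl

theorem arc_subset_arcs (x : X) : arc x ⊆ arcs X :=
  subset_iUnion arc x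

theorem isOpen_arcs : IsOpen (arcs X) :=
  isOpen_iUnion isOpen_arc

theorem isOpenEmbedding_sigma_arcParam :
    IsOpenEmbedding fun a : Σ x : X, arcParam x => noodlePt a.1 a.2 := by
  refine .of_continuous_injective_isOpenMap ?_ ?_ (isOpenMap_sigma.2 fun x O hO => ?_)
  · exact continuous_sigma fun x => (continuous_noodlePt x).comp continuous_subtype_val
  · rintro ⟨x, r, hr⟩ ⟨y, s, hs⟩ h
    obtain ⟨rfl, rfl⟩ := noodlePt_inj.1 h
    rfl
  · rw [← image_image (noodlePt x) Subtype.val]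
    exact isOpen_image_noodlePt ((isOpen_arcParam x).isOpenMap_subtype_val O hO)
      (Subtype.coe_image_subset _ _)

theorem range_sigma_arcParam :
    range (fun a : Σ x : X, arcParam x => noodlePt a.1 a.2) = arcs X := by
  ext p
  simp [arcs, arc]

variable (X) in
/-- The arcs are pairwise separated, so their union is the topological sum of the intervals that
parametrize them. -/
noncomputable def sigmaArcParamHomeomorph : (Σ x : X, arcParam x) ≃ₜ arcs X :=
  isOpenEmbedding_sigma_arcParam.toIsEmbedding.toHomeomorph.trans
    (.setCongr range_sigma_arcParam)

theorem isTopologicalGroup_arcs : IsTopologicalGroup (arcs X ≃ₜ arcs X) := by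
  have (x : X) : LocallyConnectedSpace (arcParam x) := (isOpen_arcParam x).locallyConnectedSpace
  have (x : X) : RimFiniteSpace (arcParam x) := .of_isEmbedding .subtypeVal
  let e := (sigmaArcParamHomeomorph X).symm
  have : T2Space (arcs X) := e.isEmbedding.t2Space
  have : LocallyConnectedSpace (arcs X) := e.locallyConnectedSpace
  have : RimFiniteSpace (arcs X) := .of_isEmbedding e.isEmbedding
  exact homPTop.isTopologicalGroup

theorem noodlePt_zero_not_between {α : Type*} [TopologicalSpace α]
    [ConditionallyCompleteLinearOrder α] [OrderTopology α] [DenselyOrdered α] {γ : α → Noodles X}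
    (hγ : Continuous γ) (hinj : Function.Injective γ) {a b c : α} {x y z : X}
    (hopen : IsOpen (γ '' Ioo a c)) (hab : a < b) (ha : γ a = noodlePt x 0)
    (hb : γ b = noodlePt y 0) (hc : γ c = noodlePt z 0) : ¬ b < c := by
  intro hbc
  have hmem : noodlePt y 0 ∈ γ '' Ioo a c := ⟨b, ⟨hab, hbc⟩, hb⟩
  obtain ⟨r, hr, t, ht, htr⟩ := exists_pos_noodlePt_mem hopen hmem
  have hle : coord y (γ t) ≤ 0 :=
    le_of_injOn_lt_of_continuousOn (φ := coord y ∘ γ) ((continuous_coord y).comp hγ).continuousOn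
      ((injOn_coord y).comp hinj.injOn fun _ ht => ht)
      (by simp [ha, coord_noodlePt_zero]) (by simp [hc, coord_noodlePt_zero])
      (Ioo_subset_Icc_self ht)
  rw [htr, coord_noodlePt_self] at hle
  exact hle.not_gt hr

theorem finite_arcParam_noodlePt_zero (h : Noodles X ≃ₜ Noodles X) (x : X) :
    {t ∈ arcParam x | ∃ y, h (noodlePt x t) = noodlePt y 0}.Finite := by
  refine finite_of_forall_not_lt_lt ?_
  rintro a ⟨haJ, x', ha⟩ b ⟨-, y, hb⟩ c ⟨hcJ, z, hc⟩ hab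
  have hopen : IsOpen (h ∘ noodlePt x '' Ioo a c) := by
    rw [image_comp]
    exact h.isOpenMap _ (isOpen_image_noodlePt isOpen_Ioo
      (Ioo_subset_Icc_self.trans ((ordConnected_arcParam x).out haJ hcJ)))
  exact noodlePt_zero_not_between (h.continuous.comp (continuous_noodlePt x))
    (h.injective.comp (noodlePt_injective x)) hopen hab ha hb hc

theorem map_mem_arcs (h : Noodles X ≃ₜ Noodles X) {p : Noodles X} (hp : p ∈ arcs X) :
    h p ∈ arcs X := by
  by_contra hhp
  obtain ⟨y, hy, hyiso⟩ := exists_eq_noodlePt_zero hhp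
  obtain ⟨x, s, rfl⟩ := exists_eq_noodlePt p
  rw [noodlePt_mem_arcs] at hp
  let Z := {t ∈ arcParam x | ∃ y, h (noodlePt x t) = noodlePt y 0}
  let O := arcParam x \ (Z \ {s})
  have hO : IsOpen O :=
    (isOpen_arcParam x).sdiff ((finite_arcParam_noodlePt_zero h x).subset sdiff_subset).isClosed
  have hbase : (noodlePt · 0) ⁻¹' (h '' (noodlePt x '' O)) = {y} := by
    ext y'
    constructor
    · rintro ⟨_, ⟨t, ⟨htJ, htZ⟩, rfl⟩, ht⟩
      obtain rfl : t = s := by_contra fun hts => htZ ⟨⟨htJ, y', ht⟩, hts⟩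
      exact (noodlePt_inj.1 (ht.symm.trans hy)).1
    · rintro rfl
      exact ⟨_, ⟨s, ⟨hp, fun hs => hs.2 rfl⟩, rfl⟩, hy⟩
  exact hyiso (hbase ▸ (isOpen_iff.1 (h.isOpenMap _ (isOpen_image_noodlePt hO sdiff_subset))).1)

theorem mem_arcs_iff_map_mem_arcs (h : Noodles X ≃ₜ Noodles X) (p : Noodles X) :
    p ∈ arcs X ↔ h p ∈ arcs X :=
  ⟨map_mem_arcs h, fun hp => by simpa using map_mem_arcs h.symm hp⟩

theorem image_arcs (h : Noodles X ≃ₜ Noodles X) : h '' arcs X = arcs X := by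
  rw [h.image_eq_preimage_symm]
  exact ext fun p => (mem_arcs_iff_map_mem_arcs h.symm p).symm

theorem connectedComponentIn_arcs {x : X} {p : Noodles X} (hp : p ∈ arc x) :
    connectedComponentIn (arcs X) p = arc x := by
  have hconn : IsPreconnected (arc x) :=
    (ordConnected_arcParam x).isPreconnected.image _ (continuous_noodlePt x).continuousOn
  refine Subset.antisymm ?_ (hconn.subset_connectedComponentIn hp (arc_subset_arcs x))
  refine isPreconnected_connectedComponentIn.subset_left_of_subset_union
    (v := ⋃ y ≠ x, arc y) (isOpen_arc x) (isOpen_biUnion fun y _ => isOpen_arc y) ?_ ?_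
    ⟨p, mem_connectedComponentIn (arc_subset_arcs x hp), hp⟩
  · rw [disjoint_left]
    rintro _ ⟨r, -, rfl⟩ hr'
    obtain ⟨y, hyx, hy⟩ := mem_iUnion₂.1 hr'
    exact hyx (noodlePt_mem_arc.1 hy).1.symm
  · refine (connectedComponentIn_subset _ _).trans (iUnion_subset fun y => ?_)
    obtain rfl | hyx := eq_or_ne y x
    · exact subset_union_left
    · exact (subset_biUnion_of_mem (u := arc) hyx).trans subset_union_right

theorem image_arc_eq_arc (h : Noodles X ≃ₜ Noodles X) {x z : X} {p : Noodles X} (hp : p ∈ arc x)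
    (hhp : h p ∈ arc z) : h '' arc x = arc z := by
  rw [← connectedComponentIn_arcs hp, h.image_connectedComponentIn (arc_subset_arcs x hp),
    image_arcs, connectedComponentIn_arcs hhp]

theorem isOpen_sdiff_arc {x : X} (hx : ¬ IsOpen {x}) {U : Set (Noodles X)} (hU : IsOpen U)
    (hxU : noodlePt x 0 ∉ U) : IsOpen (U \ arc x) := by
  rw [isOpen_iff] at hU ⊢
  refine ⟨?_, fun y => ?_⟩
  · convert hU.1 using 1
    ext y
    simp [noodlePt_mem_arc, arcParam, hx]
  · obtain rfl | hyx := eq_or_ne y x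
    · convert isOpen_empty using 1
      ext r
      obtain rfl | hr := eq_or_ne r 0
      · simp [hxU]
      · simp [noodlePt_mem_arc, arcParam, unitInterval.pos_iff_ne_zero.2 hr]
    · convert hU.2 y using 1
      ext r
      simp [noodlePt_mem_arc, hyx]

theorem closure_arc_sdiff_arcs {x : X} (hx : ¬ IsOpen {x}) :
    closure (arc x) \ arcs X = closure {noodlePt x 0} := by
  refine Subset.antisymm ?_ (subset_sdiff.2 ⟨?_, ?_⟩)
  · rintro q ⟨hq, hqarcs⟩
    refine mem_closure_iff.2 fun U hU hqU => inter_singleton_nonempty.2 (by_contra fun hxU => ?_)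
    obtain ⟨p, ⟨-, hp⟩, hp'⟩ := mem_closure_iff.1 hq _ (isOpen_sdiff_arc hx hU hxU)
      ⟨hqU, fun hqarc => hqarcs (arc_subset_arcs x hqarc)⟩
    exact hp hp'
  · refine closure_minimal (singleton_subset_iff.2 (mem_closure_iff.2 fun U hU hxU => ?_))
      isClosed_closure
    obtain ⟨r, hr, hrU⟩ := exists_pos_noodlePt_mem hU hxU
    exact ⟨_, hrU, r, Or.inl hr, rfl⟩
  · exact (disjoint_singleton_left.2 (mt noodlePt_zero_mem_arcs.1 hx)).closure_left isOpen_arcs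

theorem eventually_inseparable {p : Noodles X} (hp : p ∉ arcs X) (f : Noodles X ≃ₜ Noodles X) :
    ∀ᶠ g in 𝓝 f, Inseparable (g p) (f p) := by
  obtain ⟨x, rfl, hx⟩ := exists_eq_noodlePt_zero hp
  have hone := noodlePt_one_mem_arc x
  obtain ⟨z, hz⟩ := mem_iUnion.1 (map_mem_arcs f (arc_subset_arcs x hone))
  have hclosure (g : Noodles X ≃ₜ Noodles X) (hg : g (noodlePt x 1) ∈ arc z) :
      closure {g (noodlePt x 0)} = closure (arc z) \ arcs X := by
    rw [← image_singleton, ← g.image_closure, ← closure_arc_sdiff_arcs hx, image_sdiff g.injective,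
      g.image_closure, image_arcs, image_arc_eq_arc g hone hg]
  filter_upwards [(homPTop.continuous_eval (noodlePt x 1)).continuousAt
    ((isOpen_arc z).mem_nhds hz)] with g hg
  rw [inseparable_iff_closure_eq, hclosure g hg, hclosure f hz]

end Noodles

/-- For any topological space `X`, `Hom_p(XI)` is a topological group: composition is
jointly continuous and inversion is continuous, where `XI` is the Alexandroff Noodles. -/
theorem noodles_homP_topologicalGroup (X : Type*) [TopologicalSpace X] :
    Continuous[@instTopologicalSpaceProd _ _ (homPTop (Noodles X)) (homPTop (Noodles X)),
        homPTop (Noodles X)]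
      (fun p : (Noodles X ≃ₜ Noodles X) × (Noodles X ≃ₜ Noodles X) => p.2.trans p.1) ∧
    Continuous[homPTop (Noodles X), homPTop (Noodles X)]
      (fun f : Noodles X ≃ₜ Noodles X => f.symm) := by
  have := Noodles.isTopologicalGroup_arcs (X := X)
  have : IsTopologicalGroup (Noodles X ≃ₜ Noodles X) :=
    homPTop.isTopologicalGroup_of_invariant Noodles.mem_arcs_iff_map_mem_arcs
      fun _ => Noodles.eventually_inseparable
  exact ⟨continuous_mul, continuous_inv⟩
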